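/- The Catalan-Larcombe-French sequence {P_n}_{n≥0} is ratio log-concave; that is, for every integer n ≥ 2, (P_n/P_{n−1})^2 ≥ (P_{n−1}/P_{n−2})(P_{n+1}/P_n). -/

import Mathlib

/-!
Write `r n = P n / P (n - 1)`. Eliminating `P (n - 2)` and `P (n + 1)` with the recurrence, the
claim at `n` becomes a quartic polynomial inequality in `x = r n` with coefficients polynomial
in `n`; it holds for `14 ≤ x ≤ 16 - 16 / n` once `n ≥ 9` (`quartic_nonneg`). As `n → ∞` the quartic
tends to `(x - 8) (16 - x) (x ^ 2 - 128)`, whose simple root `x = 16` is also the limit of `r n`, so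
an upper bound for `r n` accurate to order `1 / n` is needed. The bounds
`14 ≤ r n ≤ 16 - 16 / n` propagate through `r (n + 1) = a (n + 1) - b (n + 1) / r n`, where
`a n = 8 (3 n ^ 2 - 3 n + 1) / n ^ 2` and `b n = 128 (n - 1) ^ 2 / n ^ 2` (`ratio_bounds`).
The cases `n ≤ 8` are numerical.
-/

/-- The quartic in `x = P n / P (n - 1)` to which ratio log-concavity reduces. -/
lemma quartic_nonneg (n x : ℝ) (hn : 9 ≤ n) (h1 : 14 ≤ x) (h2 : n * x ≤ 16 * (n - 1)) :
    0 ≤ x ^ 3 * (n + 1) ^ 2 * (8 * (3 * n ^ 2 - 3 * n + 1) - n ^ 2 * x)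
      - 128 * (n - 1) ^ 2 * (8 * (3 * n ^ 2 + 3 * n + 1) * x - 128 * n ^ 2) := by
  -- Expand around the upper bound: `x = (16 (n - 1) - z) / n` with `0 ≤ z ≤ 2 n - 16`.
  obtain ⟨z, hz⟩ : ∃ z, z = 16 * (n - 1) - n * x := ⟨_, rfl⟩
  obtain ⟨m, rfl⟩ : ∃ m, n = m + 9 := ⟨n - 9, by ring⟩
  have hm : 0 ≤ m := by linarith
  have hz0 : 0 ≤ z := by linarith
  have hz1 : z ≤ 2 * (m + 9) - 16 := by nlinarith
  have hw : 0 ≤ 2 * (m + 9) - 16 - z := by linarith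
  set n := m + 9 with hn'
  have hc0 : 0 ≤ 49152*n^4 - 98304*n^3 + 16384*n^2 + 65536*n - 32768 := by
    rw [hn']; ring_nf; positivity
  have hc2 : 0 ≤ 384*n^5 - 1152*n^3 - 384*n^2 + 768*n + 384 := by
    rw [hn']; ring_nf; positivity
  have hc12 : 0 ≤ (1024*n^6 - 1024*n^5 - 4096*n^4 - 3072*n^3 + 11264*n^2 + 2048*n - 6144)
      - (384*n^5 - 1152*n^3 - 384*n^2 + 768*n + 384) * (2 * n - 16) := by
    rw [hn']; ring_nf; positivity
  have hc4 : 0 ≤ n^3 + 2*n^2 + n := by rw [hn']; positivity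
  have hc34 : 0 ≤ (40*n^4 + 40*n^3 - 48*n^2 - 56*n - 8) - (n^3 + 2*n^2 + n) * (2 * n - 16) := by
    rw [hn']; ring_nf; positivity
  have key : n ^ 3 * (x ^ 3 * (n + 1) ^ 2 * (8 * (3 * n ^ 2 - 3 * n + 1) - n ^ 2 * x)
      - 128 * (n - 1) ^ 2 * (8 * (3 * n ^ 2 + 3 * n + 1) * x - 128 * n ^ 2))
      = (49152*n^4 - 98304*n^3 + 16384*n^2 + 65536*n - 32768)
        + z * (((1024*n^6 - 1024*n^5 - 4096*n^4 - 3072*n^3 + 11264*n^2 + 2048*n - 6144)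
            - (384*n^5 - 1152*n^3 - 384*n^2 + 768*n + 384) * (2 * n - 16))
          + (384*n^5 - 1152*n^3 - 384*n^2 + 768*n + 384) * (2 * n - 16 - z))
        + z ^ 3 * (((40*n^4 + 40*n^3 - 48*n^2 - 56*n - 8) - (n^3 + 2*n^2 + n) * (2 * n - 16))
          + (n^3 + 2*n^2 + n) * (2 * n - 16 - z)) := by
    rw [hz]; ring
  have hn3 : 0 < n ^ 3 := by positivity
  refine nonneg_of_mul_nonneg_right ?_ hn3
  rw [key]
  positivity

/-- The bounds `14 ≤ P n / P (n - 1) ≤ 16 - 16 / n` in denominator-free form, with `n = k + 1`. -/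
lemma ratio_bounds (P : ℕ → ℝ)
    (hrec : ∀ k : ℕ, ((k : ℝ) + 2) ^ 2 * P (k + 2) =
        8 * (3 * (k : ℝ) ^ 2 + 9 * k + 7) * P (k + 1) - 128 * ((k : ℝ) + 1) ^ 2 * P k)
    (h0 : 0 < P 8) (h1 : 14 * P 8 ≤ P 9) (h2 : 9 * P 9 ≤ 128 * P 8) (k : ℕ) (hk : 8 ≤ k) :
    0 < P k ∧ 14 * P k ≤ P (k + 1) ∧ ((k : ℝ) + 1) * P (k + 1) ≤ 16 * k * P k := by
  induction k, hk using Nat.le_induction with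
  | base => refine ⟨h0, h1, ?_⟩; norm_num; linarith
  | succ k hk ih =>
    obtain ⟨ha, hb, hc⟩ := ih
    have hr := hrec k
    have hk' : (8 : ℝ) ≤ k := by exact_mod_cast hk
    have hB : 0 < P (k + 1) := by linarith
    refine ⟨hB, ?_, ?_⟩
    · have hs : 0 < ((k : ℝ) + 2) ^ 2 := by positivity
      refine le_of_mul_le_mul_left ?_ hs
      rw [show k + 1 + 1 = k + 2 from rfl, hr]
      have e1 : 128 * ((k : ℝ) + 1) ^ 2 * (14 * P k) ≤ 128 * ((k : ℝ) + 1) ^ 2 * P (k + 1) := by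
        gcongr
      have e2 : 0 ≤ (12 * ((k : ℝ) + 2) ^ 2 - 80 * (k + 2) - 16) * P (k + 1) := by
        apply mul_nonneg _ hB.le
        nlinarith
      nlinarith
    · have hs : 0 < (k : ℝ) * (k + 2) := by positivity
      refine le_of_mul_le_mul_left ?_ hs
      push_cast
      rw [show k + 1 + 1 = k + 2 from rfl]
      have e1 : 8 * ((k : ℝ) + 1) ^ 2 * ((k + 1) * P (k + 1))
          ≤ 8 * ((k : ℝ) + 1) ^ 2 * (16 * k * P k) := by
        gcongr
      have e3 : (k : ℝ) * (((k : ℝ) + 2) ^ 2 * P (k + 2)) =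
        k * (8 * (3 * (k : ℝ) ^ 2 + 9 * k + 7) * P (k + 1) - 128 * ((k : ℝ) + 1) ^ 2 * P k) := by
        rw [hr]
      nlinarith

/-- The Catalan-Larcombe-French sequence `{P_n}_{n ≥ 0}` is ratio log-concave. -/
theorem stmt_1 (P : ℕ → ℝ) (hP0 : P 0 = 1) (hP1 : P 1 = 8)
    (hrec : ∀ n : ℕ, 2 ≤ n →
      (n : ℝ) ^ 2 * P n =
        8 * (3 * (n : ℝ) ^ 2 - 3 * (n : ℝ) + 1) * P (n - 1)
          - 128 * ((n : ℝ) - 1) ^ 2 * P (n - 2)) :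
    ∀ n : ℕ, 2 ≤ n →
      (P (n - 1) / P (n - 2)) * (P (n + 1) / P n) ≤ (P n / P (n - 1)) ^ 2 := by
  have hrec' : ∀ k : ℕ, ((k : ℝ) + 2) ^ 2 * P (k + 2) =
      8 * (3 * (k : ℝ) ^ 2 + 9 * k + 7) * P (k + 1) - 128 * ((k : ℝ) + 1) ^ 2 * P k := by
    intro k
    have h := hrec (k + 2) (by omega)
    rw [show k + 2 - 1 = k + 1 by omega, show k + 2 - 2 = k by omega] at h
    push_cast at h
    linear_combination h
  have p2 : P 2 = 80 := by have := hrec' 0; norm_num [hP0, hP1] at this; linarith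
  have p3 : P 3 = 896 := by have := hrec' 1; norm_num [p2, hP1] at this; linarith
  have p4 : P 4 = 10816 := by have := hrec' 2; norm_num [p2, p3] at this; linarith
  have p5 : P 5 = 137728 := by have := hrec' 3; norm_num [p3, p4] at this; linarith
  have p6 : P 6 = 1823744 := by have := hrec' 4; norm_num [p4, p5] at this; linarith
  have p7 : P 7 = 24862720 := by have := hrec' 5; norm_num [p5, p6] at this; linarith
  have p8 : P 8 = 346498048 := by have := hrec' 6; norm_num [p6, p7] at this; linarith
  have p9 : P 9 = 4911669248 := by have := hrec' 7; norm_num [p7, p8] at this; linarith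
  have hB := ratio_bounds P hrec' (by rw [p8]; norm_num) (by rw [p8, p9]; norm_num)
    (by rw [p8, p9]; norm_num)
  intro n hn
  rcases Nat.lt_or_ge n 9 with h9 | h9
  · interval_cases n <;> norm_num [hP0, hP1, p2, p3, p4, p5, p6, p7, p8, p9]
  obtain ⟨k, rfl⟩ : ∃ k, n = k + 2 := ⟨n - 2, by omega⟩
  rw [show k + 2 - 1 = k + 1 by omega, show k + 2 - 2 = k by omega]
  obtain ⟨hpos, hlo, hhi⟩ := hB (k + 1) (by omega)
  rw [show k + 1 + 1 = k + 2 from rfl] at hlo hhi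
  have hk : (7 : ℝ) ≤ k := by exact_mod_cast (by omega : 7 ≤ k)
  -- `hB` does not cover index `7`, which is needed when `n = 9`.
  have hA : 0 < P k := by
    rcases Nat.lt_or_ge k 8 with h | h
    · obtain rfl : k = 7 := by omega
      rw [p7]; norm_num
    · exact (hB k h).1
  have hC : 0 < P (k + 2) := by linarith
  have r1 := hrec' k
  have r2 := hrec' (k + 1)
  rw [show k + 1 + 2 = k + 2 + 1 from rfl, show k + 1 + 1 = k + 2 from rfl] at r2
  push_cast at hhi r2
  obtain ⟨x, hx⟩ : ∃ x, P (k + 2) = x * P (k + 1) := ⟨P (k + 2) / P (k + 1), by field_simp⟩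
  have q := quartic_nonneg ((k : ℝ) + 2) x (by linarith)
    (by rw [hx] at hlo; exact le_of_mul_le_mul_right hlo hpos)
    (by
      rw [hx] at hhi
      refine le_of_mul_le_mul_right ?_ hpos
      linarith)
  have main : P (k + 1) ^ 3 * P (k + 2 + 1) ≤ P k * P (k + 2) ^ 3 := by
    have hs : 0 < 128 * ((k : ℝ) + 1) ^ 2 * (k + 3) ^ 2 := by positivity
    have q' := mul_nonneg q (pow_pos hpos 4).le
    refine le_of_mul_le_mul_left ?_ hs
    rw [← sub_nonneg]
    refine q'.trans_eq ?_
    have t1 : 128 * ((k : ℝ) + 1) ^ 2 * P k =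
      8 * (3 * (k : ℝ) ^ 2 + 9 * k + 7) * P (k + 1) - ((k : ℝ) + 2) ^ 2 * P (k + 2) := by
      linarith
    rw [hx] at t1 r2 ⊢
    linear_combination (-((k : ℝ) + 3) ^ 2 * (x * P (k + 1)) ^ 3) * t1
      + (128 * ((k : ℝ) + 1) ^ 2 * P (k + 1) ^ 3) * r2
  rw [div_mul_div_comm, div_pow, div_le_div_iff₀ (by positivity) (by positivity)]
  linarith
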